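/- arXiv:0706.1138 — 3 statements merged into one kernel-verified Lean document; each statement's English description precedes it below -/
import Mathlib

section
/- Let (A, m, k) and (B, n, k') be Noetherian local rings and let φ : A → B be a local ring homomorphism (φ(m) ⊆ n). If dim B = dim A + dim(B ⊗_A k) and both A and B ⊗_A k = B/mB are regular local rings, then B is flat over A and B is a regular local ring. -/
/-- A Noetherian local ring whose maximal ideal can be generated by
Krull-dimension many elements, i.e. a regular local ring. -/
def IsRegularLocal (R : Type*) [CommRing R] : Prop :=
  IsNoetherianRing R ∧ ∃ _h : IsLocalRing R, ∃ s : Finset R,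
    Ideal.span (s : Set R) = IsLocalRing.maximalIdeal R ∧
    (s.card : WithBot ℕ∞) = ringKrullDim R

/-!
Write `m_B = m_A B + J` with `J` generated by lifts of a minimal system of generators of the maximal
ideal of `B / m_A B`. Regularity of `A` and of the fiber makes the number of generators used equal
to `dim A + dim (B / m_A B) = dim B`, so `B` is regular.

Flatness follows by induction on the number of generators of `m_A`. A minimal generator `x` of `m_A`
cannot vanish in `B`, since otherwise fewer than `dim B` elements would generate `m_B`; as the
regular local ring `B` is a domain, `x` is `B`-regular. Passing to `A / x` and `B / x B` lowers both
sides of the dimension equality by one, and the `A / x`-flatness of `B / x B` lifts to the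
`A`-flatness of `B` by the local criterion along the regular element `x`.
-/

open IsLocalRing TensorProduct

section LocalCriterion

variable {A P L N M : Type*} [CommRing A] [AddCommGroup P] [Module A P] [AddCommGroup L]
  [Module A L] [AddCommGroup N] [Module A N] [AddCommGroup M] [Module A M]

theorem lTensor_injective_of_isTorsionBySet (I : Ideal A) [Module.Flat (A ⧸ I) ((A ⧸ I) ⊗[A] P)]
    (hM : Module.IsTorsionBySet A M I) (f : N →ₗ[A] M) (hf : Function.Injective f) :
    Function.Injective (f.lTensor P) := by
  have hN : Module.IsTorsionBySet A N I := fun n a ↦ hf <| by rw [map_smul, map_zero, hM]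
  rw [LinearMap.lTensor_inj_iff_rTensor_inj]
  let := hN.module
  let := hM.module
  have : IsScalarTower A (A ⧸ I) N := hN.isScalarTower
  have : IsScalarTower A (A ⧸ I) M := hM.isScalarTower
  let g : N →ₗ[A ⧸ I] M := f.extendScalarsOfSurjective Ideal.Quotient.mk_surjective
  have hg : Function.Injective (g.rTensor ((A ⧸ I) ⊗[A] P)) :=
    Module.Flat.rTensor_preserves_injective_linearMap g hf
  let eN := AlgebraTensorModule.cancelBaseChange A (A ⧸ I) (A ⧸ I) N P
  let eM := AlgebraTensorModule.cancelBaseChange A (A ⧸ I) (A ⧸ I) M P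
  have f_eq : ⇑(f.rTensor P) = eM ∘ g.rTensor _ ∘ eN.symm := by
    funext u
    induction u with
    | zero => simp
    | add u v hu hv => simp_all only [Function.comp_apply, map_add]
    | tmul n p => simp [eN, eM, g]
  rw [f_eq]
  exact eM.injective.comp (hg.comp eN.symm.injective)

theorem mem_range_lTensor_of_lTensor_eq_zero (I : Ideal A)
    [Module.Flat (A ⧸ I) ((A ⧸ I) ⊗[A] P)] {f : N →ₗ[A] M} {g : L →ₗ[A] N}
    (hg : LinearMap.range g = (I • ⊤ : Submodule A M).comap f) {u : P ⊗[A] N}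
    (hu : f.lTensor P u = 0) : ∃ v, g.lTensor P v = u := by
  let fbar : (N ⧸ LinearMap.range g) →ₗ[A] M ⧸ (I • ⊤ : Submodule A M) :=
    Submodule.mapQ _ _ f hg.le
  have hfbar : Function.Injective fbar := by
    rw [← LinearMap.ker_eq_bot, Submodule.ker_mapQ, ← hg, Submodule.mkQ_map_self]
  have hinj := lTensor_injective_of_isTorsionBySet (P := P) I
    (Module.isTorsionBySet_quotient_ideal_smul M I) fbar hfbar
  have hcomp : fbar ∘ₗ (LinearMap.range g).mkQ = Submodule.mkQ _ ∘ₗ f := Submodule.mapQ_mkQ _ _ _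
  refine (lTensor_exact P (LinearMap.exact_map_mkQ_range g) (Submodule.mkQ_surjective _) u).1 ?_
  refine hinj ?_
  rw [map_zero, ← LinearMap.comp_apply, ← LinearMap.lTensor_comp, hcomp, LinearMap.lTensor_comp,
    LinearMap.comp_apply, hu, map_zero]

theorem range_smul_id (x : A) :
    LinearMap.range (x • LinearMap.id : M →ₗ[A] M) = Ideal.span {x} • ⊤ := by
  ext m
  simp [Submodule.ideal_span_singleton_smul, Submodule.mem_smul_pointwise_iff_exists]

variable {x : A} [Module.Flat (A ⧸ Ideal.span {x}) ((A ⧸ Ideal.span {x}) ⊗[A] P)]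

theorem lTensor_injective_of_smul_mem_range (hreg : IsSMulRegular (P ⊗[A] M) x)
    {f : N →ₗ[A] M} (hf : Function.Injective f) (hx : ∀ m, x • m ∈ LinearMap.range f) :
    Function.Injective (f.lTensor P) := by
  obtain ⟨g, hfg⟩ : ∃ g : M →ₗ[A] N, f ∘ₗ g = x • LinearMap.id := by
    let e := LinearEquiv.ofInjective f hf
    refine ⟨e.symm ∘ₗ (LinearMap.lsmul A M x).codRestrict _ hx, LinearMap.ext fun m ↦ ?_⟩
    exact congrArg Subtype.val (e.apply_symm_apply ⟨x • m, hx m⟩)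
  have hg : LinearMap.range g = (Ideal.span {x} • ⊤ : Submodule A M).comap f := by
    rw [← range_smul_id, ← hfg, LinearMap.range_comp, Submodule.comap_map_eq_of_injective hf]
  rw [injective_iff_map_eq_zero]
  intro u hu
  obtain ⟨v, rfl⟩ := mem_range_lTensor_of_lTensor_eq_zero (Ideal.span {x}) hg hu
  rw [← LinearMap.comp_apply, ← LinearMap.lTensor_comp, hfg, LinearMap.lTensor_smul,
    LinearMap.lTensor_id, LinearMap.smul_apply, LinearMap.id_apply] at hu
  rw [hreg.right_eq_zero_of_smul hu, map_zero]

variable {B : Type*} [CommRing B] [IsNoetherianRing B] [Algebra A B] [Module B P]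
  [IsScalarTower A B P] [Module.Finite B P]

theorem lTensor_injective_of_isSMulRegular_quotient [Module.Finite A N]
    (hxB : algebraMap A B x ∈ (⊥ : Ideal B).jacobson) (hreg : IsSMulRegular (P ⊗[A] M) x)
    {f : N →ₗ[A] M} (hf : Function.Injective f)
    (hquot : IsSMulRegular (M ⧸ LinearMap.range f) x) : Function.Injective (f.lTensor P) := by
  have : Module.Finite B (P ⊗[A] N) :=
    .equiv (AlgebraTensorModule.cancelBaseChange A B B P N)
  let K : Submodule B (P ⊗[A] N) := LinearMap.ker (AlgebraTensorModule.lTensor B P f)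
  have hrange : LinearMap.range (x • LinearMap.id : N →ₗ[A] N) =
      (Ideal.span {x} • ⊤ : Submodule A M).comap f := by
    ext n
    rw [← range_smul_id]
    constructor
    · rintro ⟨n, rfl⟩
      exact ⟨f n, (f.map_smul x n).symm⟩
    · rintro ⟨m, hm⟩
      obtain ⟨n', rfl⟩ := (isSMulRegular_quotient_iff_mem_of_smul_mem _ x).1 hquot m ⟨n, hm.symm⟩
      exact ⟨n', hf ((f.map_smul x n').trans hm)⟩
  have hK : K ≤ Ideal.span {algebraMap A B x} • K := by
    intro u (hu : f.lTensor P u = 0)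
    obtain ⟨v, rfl⟩ := mem_range_lTensor_of_lTensor_eq_zero (Ideal.span {x}) hrange hu
    have hxv : x • f.lTensor P v = 0 := by
      rw [← map_smul]
      simpa only [LinearMap.lTensor_smul, LinearMap.lTensor_id, LinearMap.smul_apply,
        LinearMap.id_apply] using hu
    rw [LinearMap.lTensor_smul, LinearMap.lTensor_id, LinearMap.smul_apply, LinearMap.id_apply,
      ← algebraMap_smul B x v]
    exact Submodule.smul_mem_smul (Ideal.mem_span_singleton_self _)
      (LinearMap.mem_ker.2 (hreg.right_eq_zero_of_smul hxv))
  have hK_bot : K = ⊥ := Submodule.eq_bot_of_le_smul_of_le_jacobson_bot _ K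
    (IsNoetherian.noetherian K) hK ((Ideal.span_singleton_le_iff_mem _).2 hxB)
  have hinj : Function.Injective (AlgebraTensorModule.lTensor B P f) :=
    LinearMap.ker_eq_bot.1 hK_bot
  exact hinj

theorem flat_of_flat_quotient_span_singleton [IsNoetherianRing A]
    (hxB : algebraMap A B x ∈ (⊥ : Ideal B).jacobson) (hreg : IsSMulRegular P x) :
    Module.Flat A P := by
  have hregA : IsSMulRegular (P ⊗[A] A) x :=
    (LinearEquiv.isSMulRegular_congr (TensorProduct.rid A P) x).2 hreg
  rw [Module.Flat.iff_lTensor_injective']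
  intro I
  induction I using WellFoundedGT.induction with
  | ind I ih =>
  by_cases hsat : IsSMulRegular (A ⧸ I) x
  · exact lTensor_injective_of_isSMulRegular_quotient hxB hregA I.subtype_injective
      (by rwa [Submodule.range_subtype])
  · let J : Ideal A := Submodule.comap (LinearMap.lsmul A A x) I
    have hIJ : I ≤ J := fun a ha ↦ I.mul_mem_left x ha
    have hIJ' : I < J := by
      rw [isSMulRegular_quotient_iff_mem_of_smul_mem] at hsat
      exact hIJ.lt_of_not_ge fun h ↦ hsat fun a ha ↦ h ha
    have hJ : Function.Injective (J.subtype.lTensor P) := ih J hIJ'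
    have hinc : Function.Injective ((Submodule.inclusion hIJ).lTensor P) :=
      lTensor_injective_of_smul_mem_range (hregA.of_injective (J.subtype.lTensor P) hJ)
        (Submodule.inclusion_injective hIJ) fun a ↦ ⟨⟨x • a, a.2⟩, rfl⟩
    rw [← Submodule.subtype_comp_inclusion I J hIJ, LinearMap.lTensor_comp]
    exact hJ.comp hinc

end LocalCriterion

theorem flat_quotient_tensor_of_flat_quotient_map {A B : Type*} [CommRing A] [CommRing B]
    [Algebra A B] (I : Ideal A) [Module.Flat (A ⧸ I) (B ⧸ I.map (algebraMap A B))] :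
    Module.Flat (A ⧸ I) ((A ⧸ I) ⊗[A] B) :=
  .of_linearEquiv
    (Algebra.TensorProduct.quotIdealMapEquivQuotTensor B I).symm.toLinearEquiv

section Generators

theorem exists_span_singleton_sup_eq {R M : Type*} [CommRing R] [IsLocalRing R] [AddCommGroup M]
    [Module R M] {N : Submodule R M} (hN : N.FG) {y : M} (hy : y ∈ N)
    (hy' : y ∉ maximalIdeal R • N) :
    ∃ N' : Submodule R M, N'.FG ∧ Submodule.span R {y} ⊔ N' = N ∧
      N'.spanFinrank + 1 ≤ N.spanFinrank := by
  classical
  obtain ⟨s, hcard, rfl⟩ := hN.exists_span_finset_card_eq_spanFinrank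
  obtain ⟨c, -, rfl⟩ := Submodule.mem_span_finset.1 hy
  obtain ⟨a, has, hca⟩ : ∃ a ∈ s, IsUnit (c a) := by
    contrapose! hy'
    exact Submodule.sum_mem _ fun a ha ↦ Submodule.smul_mem_smul
      ((mem_maximalIdeal _).2 (hy' a ha)) (Submodule.subset_span ha)
  set y := ∑ b ∈ s, c b • b with hy_def
  set N' := Submodule.span R (s.erase a : Set M) with hN'
  have herase : ∀ b ∈ s.erase a, b ∈ N' := fun b hb ↦ Submodule.subset_span hb
  refine ⟨N', ⟨_, rfl⟩, le_antisymm ?_ ?_, ?_⟩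
  · exact sup_le ((Submodule.span_singleton_le_iff_mem _ _).2 hy)
      (Submodule.span_mono (Finset.erase_subset a s))
  · rw [Submodule.span_le]
    intro b hb
    obtain rfl | hba := eq_or_ne b a
    · have hb_eq : c b • b = y - ∑ d ∈ s.erase b, c d • d := by
        rw [hy_def, ← Finset.add_sum_erase s _ has, add_sub_cancel_right]
      refine (Submodule.smul_mem_iff_of_isUnit _ hca).1 (hb_eq ▸ Submodule.sub_mem _ ?_ ?_)
      · exact Submodule.mem_sup_left (Submodule.mem_span_singleton_self y)
      · exact Submodule.mem_sup_right
          (Submodule.sum_mem _ fun d hd ↦ Submodule.smul_mem _ _ (herase d hd))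
    · exact Submodule.mem_sup_right (herase b (Finset.mem_erase.2 ⟨hba, hb⟩))
  · have hrank := Submodule.spanFinrank_span_le_ncard_of_finite (R := R) (s.erase a).finite_toSet
    rw [Set.ncard_coe_finset] at hrank
    rw [← hcard, ← Finset.card_erase_add_one has]
    exact Nat.add_le_add_right hrank 1

theorem exists_ideal_map_eq_of_surjective {R S : Type*} [CommRing R] [CommRing S] {f : R →+* S}
    (hf : Function.Surjective f) {K : Ideal S} (hK : K.FG) :
    ∃ J : Ideal R, J.FG ∧ J.map f = K ∧ J.spanFinrank ≤ K.spanFinrank := by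
  classical
  obtain ⟨s, hcard, rfl⟩ := Submodule.FG.exists_span_finset_card_eq_spanFinrank hK
  obtain ⟨g, hg⟩ := hf.hasRightInverse
  refine ⟨Ideal.span (g '' s), Submodule.fg_span (s.finite_toSet.image g), ?_, ?_⟩
  · rw [Ideal.map_span, Set.image_image]
    simp only [hg _, Set.image_id', Ideal.submodule_span_eq]
  · rw [← hcard, ← Set.ncard_coe_finset s]
    exact (Submodule.spanFinrank_span_le_ncard_of_finite (s.finite_toSet.image g)).trans
      (Set.ncard_image_le s.finite_toSet)

theorem spanFinrank_sup_le {R M : Type*} [CommRing R] [AddCommGroup M] [Module R M]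
    {N N' : Submodule R M} (hN : N.FG) (hN' : N'.FG) :
    (N ⊔ N').spanFinrank ≤ N.spanFinrank + N'.spanFinrank := by
  have h := Submodule.spanRank_sup_le_sum_spanRank (p := N) (q := N')
  rw [hN.spanRank_eq_spanFinrank, hN'.spanRank_eq_spanFinrank,
    (hN.sup hN').spanRank_eq_spanFinrank] at h
  exact_mod_cast h

end Generators

section RegularLocalRing

theorem isLocalRing_quotient_of_ne_top {R : Type*} [CommRing R] [IsLocalRing R] {I : Ideal R}
    (hI : I ≠ ⊤) : IsLocalRing (R ⧸ I) :=
  have := Ideal.Quotient.nontrivial_iff.2 hI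
  .of_surjective' _ Ideal.Quotient.mk_surjective

variable {R : Type*} [CommRing R] [IsLocalRing R]

theorem exists_sup_eq_maximalIdeal [IsNoetherianRing R] (I : Ideal R) [IsLocalRing (R ⧸ I)] :
    ∃ J : Ideal R, I ⊔ J = maximalIdeal R ∧
      J.spanFinrank ≤ (maximalIdeal (R ⧸ I)).spanFinrank := by
  have hmk := Ideal.Quotient.mk_surjective (I := I)
  obtain ⟨J, -, hJ, hrank⟩ := exists_ideal_map_eq_of_surjective hmk
    (IsNoetherian.noetherian (maximalIdeal (R ⧸ I)))
  refine ⟨J, ?_, hrank⟩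
  have := Ideal.comap_isMaximal_of_surjective _ hmk (K := maximalIdeal (R ⧸ I))
  rw [← eq_maximalIdeal this, ← hJ, Ideal.comap_map_of_surjective' _ hmk, Ideal.mk_ker, sup_comm]

variable [IsNoetherianRing R]

theorem spanFinrank_maximalIdeal_le_of_sup_eq {I J : Ideal R} (h : I ⊔ J = maximalIdeal R) :
    (maximalIdeal R).spanFinrank ≤ I.spanFinrank + J.spanFinrank :=
  h ▸ spanFinrank_sup_le (IsNoetherian.noetherian I) (IsNoetherian.noetherian J)

theorem exists_span_singleton_sup_eq_maximalIdeal {y : R} (hy : y ∈ maximalIdeal R)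
    (hy' : y ∉ maximalIdeal R ^ 2) :
    ∃ J : Ideal R, Ideal.span {y} ⊔ J = maximalIdeal R ∧
      J.spanFinrank + 1 ≤ (maximalIdeal R).spanFinrank := by
  rw [pow_two] at hy'
  obtain ⟨J, -, hJ⟩ := exists_span_singleton_sup_eq (IsNoetherian.noetherian _) hy hy'
  exact ⟨J, hJ⟩

theorem spanFinrank_maximalIdeal_quotient_span_singleton_add_one_le {y : R}
    (hy : y ∈ maximalIdeal R) (hy' : y ∉ maximalIdeal R ^ 2) [IsLocalRing (R ⧸ Ideal.span {y})] :
    (maximalIdeal (R ⧸ Ideal.span {y})).spanFinrank + 1 ≤ (maximalIdeal R).spanFinrank := by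
  obtain ⟨J, hJ, hrank⟩ := exists_span_singleton_sup_eq_maximalIdeal hy hy'
  rw [← map_maximalIdeal_of_surjective _ (Ideal.Quotient.mk_surjective (I := Ideal.span {y})),
    ← hJ, Ideal.map_sup, Ideal.map_quotient_self, bot_sup_eq, hJ]
  exact (Nat.add_le_add_right
    (Ideal.spanFinrank_map_le_of_fg _ (IsNoetherian.noetherian J)) 1).trans hrank

theorem le_ringKrullDim_quotient_span_singleton {y : R} (hy : y ∈ maximalIdeal R) {n : WithBot ℕ∞}
    (hn : n + 1 ≤ ringKrullDim R) : n ≤ ringKrullDim (R ⧸ Ideal.span {y}) := by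
  rw [← maximalIdeal_height_eq_ringKrullDim] at hn
  exact ENat.WithBot.add_le_add_one_right_iff.1
    (hn.trans (Ideal.height_le_ringKrullDim_quotient_add_one hy))

theorem isRegularLocalRing_quotient_span_singleton {R : Type*} [CommRing R] [IsRegularLocalRing R]
    {y : R} (hy : y ∈ maximalIdeal R) (hy' : y ∉ maximalIdeal R ^ 2) :
    IsRegularLocalRing (R ⧸ Ideal.span {y}) := by
  have := isLocalRing_quotient_of_ne_top (Ideal.span_singleton_ne_top hy)
  refine .of_spanFinrank_maximalIdeal_le _ (le_ringKrullDim_quotient_span_singleton hy ?_)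
  rw [← IsRegularLocalRing.spanFinrank_maximalIdeal]
  exact_mod_cast spanFinrank_maximalIdeal_quotient_span_singleton_add_one_le hy hy'

theorem exists_mem_maximalIdeal_notMem_sq_notMem_minimalPrimes (hR : ringKrullDim R ≠ 0) :
    ∃ y ∈ maximalIdeal R, y ∉ maximalIdeal R ^ 2 ∧ ∀ p ∈ minimalPrimes R, y ∉ p := by
  by_contra! hcover
  have hfin : (insert (maximalIdeal R ^ 2) (minimalPrimes R)).Finite :=
    (minimalPrimes.finite_of_isNoetherianRing R).insert _
  -- Prime avoidance tolerates the single non-prime ideal `maximalIdeal R ^ 2`.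
  obtain ⟨p, hp | hp, hle⟩ := (Ideal.subset_union_prime_finite hfin (f := id)
    (maximalIdeal R ^ 2) (maximalIdeal R ^ 2) fun p hp hne _ ↦ (hp.resolve_left hne).1.1).1
    fun y hy ↦ by
      by_cases hy' : y ∈ maximalIdeal R ^ 2
      · exact Set.mem_biUnion (Set.mem_insert _ _) hy'
      · obtain ⟨p, hp, hyp⟩ := hcover y hy hy'
        exact Set.mem_biUnion (Set.mem_insert_of_mem _ hp) hyp
  · exact (maximalIdeal_sq_lt_of_ringKrullDim_ne_zero hR).not_ge (hp ▸ hle)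
  · have : p.IsPrime := hp.1.1
    have hmax : p = maximalIdeal R := (le_maximalIdeal this.ne_top).antisymm hle
    refine hR ?_
    rw [← maximalIdeal_height_eq_ringKrullDim, ← hmax, Ideal.height_eq_zero_iff.2 hp]
    rfl

theorem isDomain_of_isPrime_span_singleton {y : R} (hy : y ∈ maximalIdeal R)
    [(Ideal.span {y}).IsPrime] (hmin : ∀ p ∈ minimalPrimes R, y ∉ p) : IsDomain R := by
  obtain ⟨p, hp, hpy⟩ := Ideal.exists_minimalPrimes_le (bot_le (a := Ideal.span {y}))
  have hpp : p.IsPrime := hp.1.1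
  have hp_le : p ≤ Ideal.span {y} • p := by
    intro z hz
    obtain ⟨b, rfl⟩ := Ideal.mem_span_singleton'.1 (hpy hz)
    rw [mul_comm]
    exact Submodule.smul_mem_smul (Ideal.mem_span_singleton_self y)
      ((hpp.mem_or_mem hz).resolve_right (hmin p hp))
  obtain rfl : p = ⊥ := Submodule.eq_bot_of_le_smul_of_le_jacobson_bot _ p
    (IsNoetherian.noetherian p) hp_le
    ((Ideal.span_singleton_le_iff_mem _).2 (maximalIdeal_le_jacobson _ hy))
  exact .of_bot_isPrime R

theorem isDomain_of_isRegularLocalRing (R : Type*) [CommRing R] [IsRegularLocalRing R] :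
    IsDomain R := by
  induction hn : (maximalIdeal R).spanFinrank using Nat.strong_induction_on generalizing R with
  | h n ih =>
  subst hn
  by_cases hdim : ringKrullDim R = 0
  · have hm : (maximalIdeal R).spanFinrank = 0 := by
      have := IsRegularLocalRing.spanFinrank_maximalIdeal (R := R)
      rw [hdim] at this
      exact_mod_cast this
    exact (isField_iff_maximalIdeal_eq.2 ((Submodule.spanFinrank_eq_zero_iff_eq_bot
      (IsNoetherian.noetherian _)).1 hm)).isDomain
  · obtain ⟨y, hy, hy', hmin⟩ := exists_mem_maximalIdeal_notMem_sq_notMem_minimalPrimes hdim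
    have := isRegularLocalRing_quotient_span_singleton hy hy'
    have := ih _ (spanFinrank_maximalIdeal_quotient_span_singleton_add_one_le hy hy') _ rfl
    have : (Ideal.span {y}).IsPrime := (Ideal.Quotient.isDomain_iff_prime _).1 this
    exact isDomain_of_isPrime_span_singleton hy hmin

end RegularLocalRing

section Fiber

variable {A B : Type*} [CommRing A] [CommRing B] [IsLocalRing A] [IsLocalRing B] [Algebra A B]

theorem map_maximalIdeal_quotient_sup_map_eq (I : Ideal A) {J : Ideal B}
    [IsLocalRing (A ⧸ I)] [IsLocalRing (B ⧸ I.map (algebraMap A B))]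
    (hJ : (maximalIdeal A).map (algebraMap A B) ⊔ J = maximalIdeal B) :
    (maximalIdeal (A ⧸ I)).map (algebraMap (A ⧸ I) (B ⧸ I.map (algebraMap A B))) ⊔
      J.map (Ideal.Quotient.mk _) = maximalIdeal (B ⧸ I.map (algebraMap A B)) := by
  rw [← map_maximalIdeal_of_surjective _ (Ideal.Quotient.mk_surjective (I := I)),
    ← map_maximalIdeal_of_surjective _
      (Ideal.Quotient.mk_surjective (I := I.map (algebraMap A B))),
    ← hJ, Ideal.map_sup, Ideal.map_map, Ideal.map_map]
  rfl

variable [IsNoetherianRing A] [IsNoetherianRing B]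

theorem isRegularLocalRing_of_map_maximalIdeal_sup_eq {J : Ideal B}
    (hJ : (maximalIdeal A).map (algebraMap A B) ⊔ J = maximalIdeal B)
    (hdim : ((maximalIdeal A).spanFinrank + J.spanFinrank : ℕ) ≤ ringKrullDim B) :
    IsRegularLocalRing B := by
  have hrank : (maximalIdeal B).spanFinrank ≤ (maximalIdeal A).spanFinrank + J.spanFinrank :=
    (spanFinrank_maximalIdeal_le_of_sup_eq hJ).trans <| Nat.add_le_add_right
      (Ideal.spanFinrank_map_le_of_fg _ (IsNoetherian.noetherian _)) _
  exact .of_spanFinrank_maximalIdeal_le _ (le_trans (by exact_mod_cast hrank) hdim)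

theorem algebraMap_ne_zero_of_spanFinrank_le_ringKrullDim {J : Ideal B}
    (hJ : (maximalIdeal A).map (algebraMap A B) ⊔ J = maximalIdeal B)
    (hdim : ((maximalIdeal A).spanFinrank + J.spanFinrank : ℕ) ≤ ringKrullDim B)
    {x : A} (hx : x ∈ maximalIdeal A) (hx' : x ∉ maximalIdeal A ^ 2) : algebraMap A B x ≠ 0 := by
  intro hx0
  obtain ⟨K, hK, hKrank⟩ := exists_span_singleton_sup_eq_maximalIdeal hx hx'
  have hKJ : K.map (algebraMap A B) ⊔ J = maximalIdeal B := by
    rw [← hJ, ← hK, Ideal.map_sup, Ideal.map_span, Set.image_singleton, hx0,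
      Ideal.span_singleton_zero, bot_sup_eq]
  have hdim_le : (maximalIdeal A).spanFinrank + J.spanFinrank ≤ (maximalIdeal B).spanFinrank := by
    exact_mod_cast hdim.trans (ringKrullDim_le_spanFinrank_maximalIdeal B)
  have hrank_le := spanFinrank_maximalIdeal_le_of_sup_eq hKJ
  have hK_le := Ideal.spanFinrank_map_le_of_fg (algebraMap A B) (IsNoetherian.noetherian K)
  lia

theorem flat_of_spanFinrank_le_ringKrullDim {A B : Type*} [CommRing A] [CommRing B] [IsLocalRing A]
    [IsLocalRing B] [IsNoetherianRing A] [IsNoetherianRing B] [Algebra A B] {J : Ideal B}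
    (hJ : (maximalIdeal A).map (algebraMap A B) ⊔ J = maximalIdeal B)
    (hdim : ((maximalIdeal A).spanFinrank + J.spanFinrank : ℕ) ≤ ringKrullDim B) :
    Module.Flat A B := by
  induction hn : (maximalIdeal A).spanFinrank using Nat.strong_induction_on generalizing A B with
  | h n ih =>
  subst hn
  by_cases hA : IsField A
  · let := hA.toField
    infer_instance
  obtain ⟨x, hx, hx'⟩ := SetLike.exists_of_lt ((maximalIdeal_sq_lt_maximalIdeal A).2 hA)
  have := isRegularLocalRing_of_map_maximalIdeal_sup_eq hJ hdim
  have := isDomain_of_isRegularLocalRing B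
  have hx0 : algebraMap A B x ≠ 0 :=
    algebraMap_ne_zero_of_spanFinrank_le_ringKrullDim hJ hdim hx hx'
  have hxB : algebraMap A B x ∈ maximalIdeal B :=
    hJ ▸ Ideal.mem_sup_left (Ideal.mem_map_of_mem _ hx)
  have hmap : (Ideal.span {x}).map (algebraMap A B) = Ideal.span {algebraMap A B x} := by
    rw [Ideal.map_span, Set.image_singleton]
  have := isLocalRing_quotient_of_ne_top (Ideal.span_singleton_ne_top hx)
  have := isLocalRing_quotient_of_ne_top (hmap ▸ Ideal.span_singleton_ne_top hxB)
  have hlt := spanFinrank_maximalIdeal_quotient_span_singleton_add_one_le hx hx'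
  have hJ_le := Ideal.spanFinrank_map_le_of_fg
    (Ideal.Quotient.mk ((Ideal.span {x}).map (algebraMap A B))) (IsNoetherian.noetherian J)
  have := ih _ hlt (map_maximalIdeal_quotient_sup_map_eq (Ideal.span {x}) hJ) (by
    rw [hmap]
    refine le_ringKrullDim_quotient_span_singleton hxB (le_trans ?_ hdim)
    rw [← hmap]
    norm_cast
    lia) rfl
  have := flat_quotient_tensor_of_flat_quotient_map (B := B) (Ideal.span {x})
  refine flat_of_flat_quotient_span_singleton (B := B) (maximalIdeal_le_jacobson _ hxB) ?_
  rw [isSMulRegular_iff_right_eq_zero_of_smul]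
  intro b hb
  rw [Algebra.smul_def] at hb
  exact (mul_eq_zero.1 hb).resolve_left hx0

end Fiber

theorem isRegularLocal_iff_isRegularLocalRing {R : Type*} [CommRing R] :
    IsRegularLocal R ↔ IsRegularLocalRing R := by
  constructor
  · rintro ⟨_, _, s, hs, hcard⟩
    refine .of_spanFinrank_maximalIdeal_le _ ?_
    rw [← hs, ← hcard, ← Set.ncard_coe_finset s]
    exact_mod_cast Submodule.spanFinrank_span_le_ncard_of_finite s.finite_toSet
  · intro _
    obtain ⟨s, hcard, hs⟩ := Submodule.FG.exists_span_finset_card_eq_spanFinrank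
      (IsNoetherian.noetherian (maximalIdeal R))
    exact ⟨inferInstance, inferInstance, s, hs,
      hcard ▸ IsRegularLocalRing.spanFinrank_maximalIdeal⟩

/-- Let `(A, m)` and `(B, n)` be Noetherian local rings and `φ : A → B` a local homomorphism.
If `dim B = dim A + dim (B ⊗_A A/m)` and both `A` and `B ⊗_A A/m = B/mB` are regular, then
`B` is flat over `A` and `B` is regular. -/
theorem flat_and_regular_of_regular_fiber
    (A B : Type*) [CommRing A] [CommRing B] [IsLocalRing A] [IsLocalRing B]
    [IsNoetherianRing A] [IsNoetherianRing B] [Algebra A B]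
    [IsLocalHom (algebraMap A B)]
    (hdim : ringKrullDim B =
      ringKrullDim A + ringKrullDim (B ⧸ (IsLocalRing.maximalIdeal A).map (algebraMap A B)))
    (hA : IsRegularLocal A)
    (hfib : IsRegularLocal (B ⧸ (IsLocalRing.maximalIdeal A).map (algebraMap A B))) :
    Module.Flat A B ∧ IsRegularLocal B := by
  rw [isRegularLocal_iff_isRegularLocalRing] at hA hfib ⊢
  obtain ⟨J, hJ, hJ_rank⟩ := exists_sup_eq_maximalIdeal ((maximalIdeal A).map (algebraMap A B))
  have hdim_le : ((maximalIdeal A).spanFinrank + J.spanFinrank : ℕ) ≤ ringKrullDim B := by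
    rw [hdim, ← hA.spanFinrank_maximalIdeal, ← hfib.spanFinrank_maximalIdeal]
    exact_mod_cast Nat.add_le_add_left hJ_rank _
  exact ⟨flat_of_spanFinrank_le_ringKrullDim hJ hdim_le,
    isRegularLocalRing_of_map_maximalIdeal_sup_eq hJ hdim_le⟩
end

section
/- Let k be an algebraically closed field of characteristic zero, let B = k[Y_1, ..., Y_n] be a polynomial ring, and let D be a k-affine domain. If D is a finite etale extension of B (i.e., there is an injective k-algebra homomorphism B → D that is module-finite, unramified, and flat), then D = B, i.e., the homomorphism is an isomorphism. -/
/-!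
Let `D` be a finite étale domain over `R[X]` with `ℚ ⊆ R`. The derivation `∂ = d/dX` lifts uniquely
to `D`, and the point is that the lift is locally nilpotent. Over the fraction field `K` of `R`,
the field of fractions of `D` is a function field of one variable, and `X∂` is a derivation with
`X∂(X⁻¹) = -X⁻¹`. In characteristic zero such a derivation cannot increase the order of a pole at a
place over `X = ∞`, so `∂` strictly lowers it. Hence for `g ∈ D` some `∂ⁿ g` has no pole at all, is
therefore algebraic over `K`, and `∂ⁿ⁺¹ g = 0`. As `∂X = 1`, it follows that the ring of constants
`N` of `∂` is isomorphic to `D / (X)`, which is finite étale over `R`; if `R` has no nontrivial such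
extension then `N = R`, and integrating gives `D = R[X]`. Induction on the number of variables
finishes the proof.
-/

open Polynomial IsDedekindDomain
open scoped WithZero TensorProduct

universe v

section ValuationTrivialOnBase

variable {K L Γ₀ : Type*} [Field K] [Field L] [Algebra K L] [LinearOrderedCommGroupWithZero Γ₀]
  (v : Valuation L Γ₀) [v.IsTrivialOn K]

variable (K) in
/-- The valuation ring of a valuation that is trivial on `K`, as a `K`-subalgebra. -/
def valuationSubalgebra : Subalgebra K L where
  toSubsemiring := v.integer.toSubsemiring
  algebraMap_mem' _ := Valuation.IsTrivialOn.valuation_algebraMap_le_one v _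

variable {v}

theorem valuation_aeval_sub_aeval_le {a b : L} (ha : v a ≤ 1) (hb : v b ≤ 1) (p : K[X]) :
    v (aeval a p - aeval b p) ≤ v (a - b) := by
  let a' : valuationSubalgebra K v := ⟨a, ha⟩
  let b' : valuationSubalgebra K v := ⟨b, hb⟩
  obtain ⟨c, hc⟩ := sub_dvd_eval_sub a' b' (p.map (algebraMap K (valuationSubalgebra K v)))
  rw [eval_map_algebraMap, eval_map_algebraMap] at hc
  have hcL : aeval a p - aeval b p = (a - b) * c := by
    apply_fun (valuationSubalgebra K v).val at hc
    rwa [map_sub, map_mul, ← aeval_algHom_apply, ← aeval_algHom_apply] at hc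
  rw [hcL, map_mul]
  exact mul_le_of_le_one_right' c.2

theorem valuation_le_one_of_isIntegral_adjoin {y x : L} (hy : v y ≤ 1)
    (hx : IsIntegral (Algebra.adjoin K {y}) x) : v x ≤ 1 := by
  have hle : Algebra.adjoin K {y} ≤ valuationSubalgebra K v :=
    Algebra.adjoin_le (Set.singleton_subset_iff.2 hy)
  have hx' : IsIntegral (valuationSubalgebra K v) x :=
    hx.map_of_comp_eq (Subalgebra.inclusion hle).toRingHom (RingHom.id L) rfl
  exact (Valuation.integer.integers v).mem_of_integral hx'

end ValuationTrivialOnBase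

theorem isIntegral_of_isIntegral_adjoin_inv {K L : Type*} [Field K] [Field L] [Algebra K L]
    {x y : L} (hy : IsIntegral (Algebra.adjoin K {y}) x)
    (hy' : IsIntegral (Algebra.adjoin K {y⁻¹}) x) : IsIntegral K x := by
  have hx : x ∈ (integralClosure (Subring.closure ((⊥ : Subalgebra K L) : Set L)) L).toSubring := by
    rw [← iInf_valuationSubring_superset, Subring.mem_iInf]
    rintro ⟨V, hKV⟩
    have : V.valuation.IsTrivialOn K :=
      .of_le_one _ fun c => (V.valuation_le_one_iff _).2 (hKV (algebraMap_mem ⊥ c))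
    refine (V.valuation_le_one_iff x).1 ?_
    rcases V.mem_or_inv_mem y with hyV | hyV
    · exact valuation_le_one_of_isIntegral_adjoin (K := K) ((V.valuation_le_one_iff _).2 hyV) hy
    · exact valuation_le_one_of_isIntegral_adjoin (K := K) ((V.valuation_le_one_iff _).2 hyV) hy'
  rw [← Subalgebra.coe_toSubring, Subring.closure_eq] at hx
  exact isIntegral_trans (A := (⊥ : Subalgebra K L)) x hx

section LogarithmicDerivation

variable {K L : Type*} [Field K] [CharZero K] [Field L] [Algebra K L]
  {v : Valuation L ℤᵐ⁰} [v.IsTrivialOn K] {θ : Derivation K L L}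

-- If `x` has order `a` and `t` has order `b`, then `u = x ^ b * t ^ (-a)` is a unit whose
-- logarithmic derivative `b * θ x / x - a * θ t / t` is dominated by its first term.
theorem exists_valuation_eq_one_of_one_lt_div {t x : L} (ht0 : t ≠ 0) (ht : v t < 1)
    (hθt : v (θ t) ≤ v t) (hx : 1 < v (θ x / x)) :
    ∃ u, v u = 1 ∧ v (θ u) = v (θ x / x) := by
  have hx0 : x ≠ 0 := by rintro rfl; simp at hx
  set a := WithZero.log (v x)
  set b := WithZero.log (v t)
  have hb : b ≠ 0 :=
    (by simpa using (WithZero.log_lt_log (v.ne_zero_iff.2 ht0) one_ne_zero).2 ht : b < 0).ne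
  set u := x ^ b * t ^ (-a)
  have hu0 : u ≠ 0 := by positivity
  have hu : v u = 1 := by
    rw [← WithZero.exp_log (v.ne_zero_iff.2 hu0), WithZero.exp_eq_one]
    rw [map_mul, map_zpow₀, map_zpow₀, WithZero.log_mul, WithZero.log_zpow, WithZero.log_zpow,
      smul_eq_mul, smul_eq_mul]
    · ring
    · exact zpow_ne_zero _ (v.ne_zero_iff.2 hx0)
    · exact zpow_ne_zero _ (v.ne_zero_iff.2 ht0)
  have hθu : θ u = u * (b * (θ x / x) - a * (θ t / t)) := by
    simp only [u, Derivation.leibniz, Derivation.leibniz_zpow, smul_eq_mul, zsmul_eq_mul,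
      zpow_sub_one₀ hx0, zpow_sub_one₀ ht0]
    push_cast
    field_simp
    ring
  have hbx : v (b * (θ x / x)) = v (θ x / x) := by
    rw [map_mul, ← map_intCast (algebraMap K L),
      Valuation.IsTrivialOn.eq_one (b : K) (by exact_mod_cast hb), one_mul]
  have hat : v (a * (θ t / t)) ≤ 1 := by
    rw [map_mul, map_div₀]
    exact mul_le_one' (intCast_mem v.integer a) (div_le_one_of_le₀ hθt zero_le)
  refine ⟨u, hu, ?_⟩
  rw [hθu, map_mul, hu, one_mul, Valuation.map_sub_eq_of_lt_left, hbx]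
  exact hbx ▸ hat.trans_lt hx

-- Replace `x` by a unit `u` and then by `q(u)`: its derivative has the size of `θ u`, but `q(u)` is
-- itself small, so the pole of the logarithmic derivative gets worse.
theorem exists_valuation_div_lt_div {t x : L} (ht0 : t ≠ 0) (ht : v t < 1) (hθt : v (θ t) ≤ v t)
    (hres : ∀ u, v u ≤ 1 → ∃ q : K[X], v (aeval u q) < 1 ∧ v (aeval u (derivative q)) = 1)
    (hx : 1 < v (θ x / x)) : ∃ y, v (θ x / x) < v (θ y / y) := by
  obtain ⟨u, hu, hθu⟩ := exists_valuation_eq_one_of_one_lt_div ht0 ht hθt hx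
  obtain ⟨q, hq, hq'⟩ := hres u hu.le
  have hθq : v (θ (aeval u q)) = v (θ x / x) := by
    rw [Derivation.map_aeval, smul_eq_mul, map_mul, hq', one_mul, hθu]
  have hx0 : 0 < v (θ x / x) := zero_lt_one.trans hx
  have hq0 : v (aeval u q) ≠ 0 := fun h => hx0.ne <| by
    rw [← hθq, v.zero_iff.1 h, map_zero, map_zero]
  refine ⟨aeval u q, ?_⟩
  rw [map_div₀ v (θ (aeval u q)), hθq]
  exact (lt_div_iff₀ (zero_lt_iff.2 hq0)).2 (mul_lt_of_lt_one_right hx0 hq)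

theorem valuation_map_le_of_bounded {t : L} (ht0 : t ≠ 0) (ht : v t < 1) (hθt : v (θ t) ≤ v t)
    (hbdd : ∃ C, ∀ u, v u ≤ 1 → v (θ u) ≤ C)
    (hres : ∀ u, v u ≤ 1 → ∃ q : K[X], v (aeval u q) < 1 ∧ v (aeval u (derivative q)) = 1)
    (x : L) : v (θ x) ≤ v x := by
  by_contra! hlt
  have hx0 : v x ≠ 0 := fun h => by simp [v.zero_iff.1 h] at hlt
  obtain ⟨C, hC⟩ := hbdd
  obtain ⟨_, ⟨z, hz, rfl⟩, hmax⟩ := Int.exists_greatest_of_bdd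
    (P := fun m => ∃ z, 1 < v (θ z / z) ∧ WithZero.log (v (θ z / z)) = m)
    ⟨WithZero.log C, by
      rintro _ ⟨z, hz, rfl⟩
      obtain ⟨u, hu, hθu⟩ := exists_valuation_eq_one_of_one_lt_div ht0 ht hθt hz
      have hzC : v (θ z / z) ≤ C := hθu ▸ hC u hu.le
      have hz0 : 0 < v (θ z / z) := zero_lt_one.trans hz
      exact (WithZero.log_le_log hz0.ne' (hz0.trans_le hzC).ne').2 hzC⟩
    ⟨_, x, by rwa [map_div₀, one_lt_div₀ (zero_lt_iff.2 hx0)], rfl⟩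
  obtain ⟨w, hw⟩ := exists_valuation_div_lt_div ht0 ht hθt hres hz
  have hz0 : 0 < v (θ z / z) := zero_lt_one.trans hz
  exact (hmax _ ⟨w, hz.trans hw, rfl⟩).not_gt
    ((WithZero.log_lt_log hz0.ne' (hz0.trans hw).ne').2 hw)

end LogarithmicDerivation

section AffineDedekindDomain

variable {K A L : Type*} [Field K] [CommRing A] [IsDedekindDomain A] [Field L] [Algebra K A]
  [Algebra A L] [Algebra K L] [IsScalarTower K A L] [IsFractionRing A L]
  (w : HeightOneSpectrum A)

instance : (w.valuation L).IsTrivialOn K :=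
  .of_le_one _ fun c => by
    rw [IsScalarTower.algebraMap_apply K A L]
    exact w.valuation_le_one _

variable [Algebra.FiniteType K A]

theorem exists_valuation_aeval_lt_one_derivative_eq_one [CharZero K] {u : L}
    (hu : w.valuation L u ≤ 1) :
    ∃ q : K[X], w.valuation L (aeval u q) < 1 ∧ w.valuation L (aeval u (derivative q)) = 1 := by
  obtain ⟨a, ha⟩ := w.exists_valuation_sub_lt_of_integer hu 1
  rw [Valuation.map_sub_swap] at ha
  have hsub (p : K[X]) : w.valuation L (aeval u p - algebraMap A L (aeval a p)) < 1 := by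
    rw [← aeval_algebraMap_apply]
    exact (valuation_aeval_sub_aeval_le hu (w.valuation_le_one a) p).trans_lt ha
  let := Ideal.Quotient.field w.asIdeal
  have : Module.Finite K (A ⧸ w.asIdeal) := finite_of_finite_type_of_isJacobsonRing K _
  have hmem (p : K[X]) : aeval a p ∈ w.asIdeal ↔ aeval (algebraMap A (A ⧸ w.asIdeal) a) p = 0 := by
    rw [aeval_algebraMap_apply, Ideal.Quotient.algebraMap_eq, Ideal.Quotient.eq_zero_iff_mem]
  have ha_int : IsIntegral K (algebraMap A (A ⧸ w.asIdeal) a) := Algebra.IsIntegral.isIntegral _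
  set q := minpoly K (algebraMap A (A ⧸ w.asIdeal) a)
  have hq : aeval a q ∈ w.asIdeal := (hmem q).2 (minpoly.aeval ..)
  have hq' : aeval a (derivative q) ∉ w.asIdeal := fun h =>
    (minpoly.irreducible ha_int).separable.aeval_derivative_ne_zero (minpoly.aeval ..)
      ((hmem _).1 h)
  refine ⟨q, ?_, ?_⟩
  · rw [← w.valuation_lt_one_iff_mem (K := L)] at hq
    simpa only [sub_add_cancel] using (w.valuation L).map_add_lt (hsub q) hq
  · rw [← w.valuation_eq_one_iff_notMem (K := L)] at hq'
    exact ((w.valuation L).map_eq_of_sub_lt (hq'.symm ▸ hsub _)).trans hq'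

theorem exists_valuation_derivation_algebraMap_le (θ : Derivation K L L) :
    ∃ C, ∀ a : A, w.valuation L (θ (algebraMap A L a)) ≤ C := by
  obtain ⟨s, hs⟩ := Algebra.FiniteType.out (R := K) (A := A)
  obtain ⟨C, hC⟩ := (s.image fun a => w.valuation L (θ (algebraMap A L a))).exists_le
  refine ⟨C, fun a => ?_⟩
  have ha : a ∈ Algebra.adjoin K (s : Set A) := hs ▸ Algebra.mem_top
  induction ha using Algebra.adjoin_induction with
  | mem a ha => exact hC _ (Finset.mem_image_of_mem _ ha)
  | algebraMap c => simp [← IsScalarTower.algebraMap_apply K A L]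
  | add a b _ _ iha ihb =>
    rw [map_add, map_add]
    exact (w.valuation L).map_add_le iha ihb
  | mul a b _ _ iha ihb =>
    rw [map_mul, Derivation.leibniz, smul_eq_mul, smul_eq_mul]
    refine (w.valuation L).map_add_le ?_ ?_ <;> rw [map_mul]
    · exact (mul_le_of_le_one_left' (w.valuation_le_one a)).trans ihb
    · exact (mul_le_of_le_one_left' (w.valuation_le_one b)).trans iha

theorem exists_valuation_derivation_le (θ : Derivation K L L) :
    ∃ C, ∀ u : L, w.valuation L u ≤ 1 → w.valuation L (θ u) ≤ C := by
  obtain ⟨C, hC⟩ := exists_valuation_derivation_algebraMap_le w θ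
  refine ⟨C, fun u hu => ?_⟩
  obtain ⟨n, d, hnd⟩ := w.exists_primeCompl_mul_eq_of_integer u hu
  have hd : w.valuation L (algebraMap A L d) = 1 := w.valuation_eq_one_iff_notMem.2 d.2
  have hθ : θ u * algebraMap A L d = θ (algebraMap A L n) - u * θ (algebraMap A L d) := by
    rw [← hnd, Derivation.leibniz, smul_eq_mul, smul_eq_mul]
    ring
  calc w.valuation L (θ u) = w.valuation L (θ u * algebraMap A L d) := by rw [map_mul, hd, mul_one]
    _ ≤ C := by
      rw [hθ]
      refine (w.valuation L).map_sub_le (hC n) ?_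
      rw [map_mul]
      exact (mul_le_of_le_one_left' hu).trans (hC d)

theorem valuation_derivation_le [CharZero K] {θ : Derivation K L L} {t : L} (ht0 : t ≠ 0)
    (ht : w.valuation L t < 1) (hθt : w.valuation L (θ t) ≤ w.valuation L t) (x : L) :
    w.valuation L (θ x) ≤ w.valuation L x :=
  valuation_map_le_of_bounded ht0 ht hθt (exists_valuation_derivation_le w θ)
    (fun _ => exists_valuation_aeval_lt_one_derivative_eq_one w) x

theorem valuation_iterate_derivation_le [CharZero K] {δ : Derivation K L L} {y : L} (hδ : δ y = 1)
    (hy : 1 < w.valuation L y) (x : L) (n : ℕ) :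
    w.valuation L (δ^[n] x) ≤ w.valuation L y⁻¹ ^ n * w.valuation L x := by
  have hy0 : y ≠ 0 := by rintro rfl; simp at hδ
  have hyv : w.valuation L y⁻¹ < 1 := by rwa [map_inv₀, inv_lt_one₀ (zero_lt_one.trans hy)]
  have hθ : (y • δ) y⁻¹ = -y⁻¹ := by
    rw [Derivation.smul_apply, Derivation.leibniz_inv, hδ, smul_eq_mul, smul_eq_mul]
    field_simp
  have hθv : w.valuation L ((y • δ) y⁻¹) ≤ w.valuation L y⁻¹ := by rw [hθ, Valuation.map_neg]
  induction n with
  | zero => simp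
  | succ n ih =>
    have hδn : δ (δ^[n] x) = y⁻¹ * (y • δ) (δ^[n] x) := by
      rw [Derivation.smul_apply, smul_eq_mul, inv_mul_cancel_left₀ hy0]
    rw [Function.iterate_succ_apply', hδn, map_mul, pow_succ', mul_assoc]
    exact mul_le_mul_right ((valuation_derivation_le w (inv_ne_zero hy0) hyv hθv _).trans ih) _

open Filter in
theorem eventually_valuation_iterate_derivation_le_one [CharZero K] {δ : Derivation K L L} {y : L}
    (hδ : δ y = 1) (hy : 1 < w.valuation L y) (x : L) :
    ∀ᶠ n in atTop, w.valuation L (δ^[n] x) ≤ 1 := by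
  rcases eq_or_ne x 0 with rfl | hx0
  · simp [iterate_map_zero]
  have hx : w.valuation L x ≠ 0 := (w.valuation L).ne_zero_iff.2 hx0
  have hyv : w.valuation L y⁻¹ < 1 := by rwa [map_inv₀, inv_lt_one₀ (zero_lt_one.trans hy)]
  obtain ⟨N, hN⟩ := exists_pow_lt₀ hyv (Units.mk0 _ (inv_ne_zero hx))
  filter_upwards [eventually_ge_atTop N] with n hn
  calc w.valuation L (δ^[n] x)
      ≤ w.valuation L y⁻¹ ^ n * w.valuation L x := valuation_iterate_derivation_le w hδ hy x n
    _ ≤ (w.valuation L x)⁻¹ * w.valuation L x :=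
      mul_le_mul_left ((pow_le_pow_right_of_le_one' hyv.le hn).trans hN.le) _
    _ = 1 := inv_mul_cancel₀ hx

theorem exists_iterate_derivation_mem_range [CharZero K] {δ : Derivation K L L} {x y : L}
    (hδ : δ y = 1) (hx : ∀ n, IsIntegral (Algebra.adjoin K {y}) (δ^[n] x)) :
    ∃ n, δ^[n] x ∈ (algebraMap A L).range := by
  obtain ⟨n, hn⟩ := ((HeightOneSpectrum.Support.finite A y).eventually_all.2 fun w hw =>
    eventually_valuation_iterate_derivation_le_one w hδ hw x).exists
  refine ⟨n, HeightOneSpectrum.mem_integers_of_valuation_le_one L _ fun w => ?_⟩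
  rcases le_or_gt (w.valuation L y) 1 with hw | hw
  · exact valuation_le_one_of_isIntegral_adjoin hw (hx n)
  · exact hn w hw

end AffineDedekindDomain

section FunctionField

open scoped IntermediateField.algebraAdjoinAdjoin IntermediateField

variable {K L : Type*} [Field K] [CharZero K] [Field L] [Algebra K L]

theorem derivation_eq_zero_of_isIntegral (δ : Derivation K L L) {x : L} (hx : IsIntegral K x) :
    δ x = 0 := by
  have h := δ.map_aeval (minpoly K x) x
  rw [minpoly.aeval, map_zero, smul_eq_mul, zero_eq_mul] at h
  exact h.resolve_left
    ((minpoly.irreducible hx).separable.aeval_derivative_ne_zero (minpoly.aeval K x))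

theorem exists_iterate_derivation_eq_zero {δ : Derivation K L L} {x y : L}
    [FiniteDimensional K⟮y⟯ L] (hδ : δ y = 1)
    (hx : ∀ n, IsIntegral (Algebra.adjoin K {y}) (δ^[n] x)) : ∃ n, δ^[n] x = 0 := by
  have hy : Transcendental K y⁻¹ := fun h => by
    have hδy := derivation_eq_zero_of_isIntegral δ h.isIntegral.inv
    rw [inv_inv, hδ] at hδy
    exact one_ne_zero hδy
  have hadj : K⟮y⁻¹⟯ = K⟮y⟯ := le_antisymm
    (IntermediateField.adjoin_simple_le_iff.2
      (inv_mem (IntermediateField.mem_adjoin_simple_self K y)))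
    (IntermediateField.adjoin_simple_le_iff.2
      (inv_mem_iff.1 (IntermediateField.mem_adjoin_simple_self K y⁻¹)))
  have : FiniteDimensional K⟮y⁻¹⟯ L := hadj ▸ ‹_›
  let R₀ := Algebra.adjoin K {y⁻¹}
  let e : K[X] ≃ₐ[K] R₀ := algEquivOfTranscendental K y⁻¹ hy
  have : IsPrincipalIdealRing R₀ := .of_surjective e.toRingHom e.surjective
  have : Algebra.FiniteType K R₀ := .equiv inferInstance e
  let A := integralClosure R₀ L
  have : IsDedekindDomain A := IsIntegralClosure.isDedekindDomain R₀ K⟮y⁻¹⟯ L A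
  have : IsFractionRing A L :=
    IsIntegralClosure.isFractionRing_of_finite_extension R₀ K⟮y⁻¹⟯ L A
  have : Module.Finite R₀ A := IsIntegralClosure.finite R₀ K⟮y⁻¹⟯ L A
  have : Algebra.FiniteType K A := .trans (S := R₀) inferInstance inferInstance
  obtain ⟨n, a, ha⟩ := exists_iterate_derivation_mem_range (A := A) hδ hx
  have ha' : IsIntegral (Algebra.adjoin K {y⁻¹}) (δ^[n] x) := ha ▸ a.2
  refine ⟨n + 1, ?_⟩
  rw [Function.iterate_succ_apply']
  exact derivation_eq_zero_of_isIntegral δ (isIntegral_of_isIntegral_adjoin_inv (hx n) ha')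

end FunctionField

theorem exists_derivation_algebraMap_eq {R S T : Type*} [CommRing R] [CommRing S] [CommRing T]
    [Algebra R S] [Algebra R T] [Algebra S T] [IsScalarTower R S T] [Algebra.FormallyEtale S T]
    (d : Derivation R S S) :
    ∃ d' : Derivation R T T, ∀ s, d' (algebraMap S T s) = algebraMap S T (d s) := by
  let l : Ω[T⁄R] →ₗ[T] T :=
    LinearMap.liftBaseChange T ((Algebra.linearMap S T).comp d.liftKaehlerDifferential) ∘ₗ
      (KaehlerDifferential.tensorKaehlerEquivOfFormallyEtale R S T).symm
  refine ⟨l.compDer (KaehlerDifferential.D R T), fun s => ?_⟩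
  simp [l, KaehlerDifferential.tensorKaehlerEquivOfFormallyEtale_symm_D_algebraMap R S T s]

section LocalNilpotency

open scoped IntermediateField.algebraAdjoinAdjoin IntermediateField

variable {R K D L : Type*} [CommRing R] [Field K] [Algebra R K]
  [CommRing D] [Algebra R D] [Algebra R[X] D] [IsScalarTower R R[X] D] [Module.Finite R[X] D]
  [Field L] [Algebra D L] [Algebra R L] [IsScalarTower R D L] [Algebra K L] [IsScalarTower R K L]

variable (R K L) in
theorem isIntegral_adjoin_algebraMap_X (g : D) :
    IsIntegral (Algebra.adjoin K {algebraMap D L (algebraMap R[X] D X)}) (algebraMap D L g) := by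
  set y := algebraMap D L (algebraMap R[X] D X)
  let φ : R[X] →ₐ[R] Algebra.adjoin K {y} := aeval ⟨y, Algebra.self_mem_adjoin_singleton K y⟩
  refine (Algebra.IsIntegral.isIntegral (R := R[X]) g).map_of_comp_eq φ.toRingHom
    (algebraMap D L) ?_
  ext r
  · simpa [φ] using (IsScalarTower.algebraMap_apply R D L r).trans <|
      congrArg (algebraMap D L) (IsScalarTower.algebraMap_apply R R[X] D r)
  · simp [φ, y]

variable (R K L) in
theorem finiteDimensional_adjoin_algebraMap_X [IsFractionRing D L] :
    FiniteDimensional K⟮algebraMap D L (algebraMap R[X] D X)⟯ L := by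
  set E := K⟮algebraMap D L (algebraMap R[X] D X)⟯
  have hD (g : D) : IsIntegral E (algebraMap D L g) :=
    (isIntegral_adjoin_algebraMap_X R K L g).tower_top
  have : Algebra.IsAlgebraic E L := ⟨fun x => by
    obtain ⟨a, b, -, rfl⟩ := IsFractionRing.div_surjective (A := D) x
    exact div_eq_mul_inv (algebraMap D L a) _ ▸ ((hD a).mul (hD b).inv).isAlgebraic⟩
  have : Algebra.FiniteType R D := .trans (S := R[X]) inferInstance inferInstance
  have : Algebra.EssFiniteType D L := .of_isLocalization L (nonZeroDivisors D)
  have : Algebra.EssFiniteType R L := .comp R D L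
  have : Algebra.EssFiniteType K L := .of_comp R K L
  have : Algebra.EssFiniteType E L := .of_comp K E L
  exact Algebra.finite_of_essFiniteType_of_isAlgebraic

theorem exists_iterate_eq_zero_of_map_algebraMap_X [IsDomain R] [CharZero R] [IsDomain D]
    [FaithfulSMul R D] {d : Derivation R D D} (hd : d (algebraMap R[X] D X) = 1) (g : D) :
    ∃ n, d^[n] g = 0 := by
  let K := FractionRing R
  let L := FractionRing D
  let := FractionRing.liftAlgebra R L
  have : Algebra.FormallyEtale D L := .of_isLocalization (nonZeroDivisors D)
  obtain ⟨δ₀, hδ₀⟩ := exists_derivation_algebraMap_eq (T := L) d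
  let δ : Derivation K L L :=
    .mk' (δ₀.toLinearMap.extendScalarsOfIsLocalization (nonZeroDivisors R) K) δ₀.leibniz
  have hδ (n : ℕ) : δ^[n] (algebraMap D L g) = algebraMap D L (d^[n] g) :=
    (Function.Semiconj.iterate_right (fun s => (hδ₀ s).symm) n g).symm
  have hδX : δ (algebraMap D L (algebraMap R[X] D X)) = 1 :=
    (hδ₀ _).trans (by rw [hd, map_one])
  have := finiteDimensional_adjoin_algebraMap_X R K (D := D) L
  obtain ⟨n, hn⟩ := exists_iterate_derivation_eq_zero hδX (x := algebraMap D L g)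
    fun n => hδ n ▸ isIntegral_adjoin_algebraMap_X R K L (d^[n] g)
  exact ⟨n, IsFractionRing.injective D L (by rw [← hδ, hn, map_zero])⟩

end LocalNilpotency

section Slice

variable {R A : Type*} [CommRing R] [CommRing A] [Algebra R A] (δ : Derivation R A A)

/-- The ring of constants (the kernel) of a derivation, as a subalgebra over the base ring. -/
def derivationConstants : Subalgebra R A where
  carrier := {a | δ a = 0}
  mul_mem' ha hb := by simp_all
  add_mem' ha hb := by simp_all
  algebraMap_mem' := δ.map_algebraMap

theorem mem_derivationConstants {a : A} : a ∈ derivationConstants δ ↔ δ a = 0 := Iff.rfl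

variable {δ} {x : A}

theorem exists_map_pow_mul_eq [Algebra ℚ A] (hx : δ x = 1) {g : A} {m : ℕ} (hg : δ^[m] g = 0)
    (j : ℕ) : ∃ h, δ (x ^ (j + 1) * h) = x ^ j * g := by
  induction m generalizing g j with
  | zero => exact ⟨0, by simp_all⟩
  | succ m ih =>
    obtain ⟨h, hh⟩ := ih (g := δ g) hg (j + 1)
    refine ⟨((j + 1 : ℚ)⁻¹) • (g - x * h), ?_⟩
    have hpow : δ (x ^ (j + 1) * (g - x * h)) = (j + 1 : ℚ) • (x ^ j * g) := by
      calc δ (x ^ (j + 1) * (g - x * h))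
          = δ (x ^ (j + 1) * g) - δ (x ^ (j + 1 + 1) * h) := by rw [← map_sub]; ring_nf
        _ = x ^ (j + 1) * δ g + g * ((j + 1) * x ^ j) - x ^ (j + 1) * δ g := by
          rw [hh]; simp [hx, nsmul_eq_mul]
        _ = (j + 1 : ℚ) • (x ^ j * g) := by
          rw [Algebra.smul_def, map_add, map_natCast, map_one]; ring
    rw [mul_smul_comm, map_rat_smul, hpow, inv_smul_smul₀ (by positivity)]

theorem exists_map_mul_eq [Algebra ℚ A] (hx : δ x = 1) {g : A} {m : ℕ} (hg : δ^[m] g = 0) :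
    ∃ h, δ (x * h) = g := by
  simpa using exists_map_pow_mul_eq hx hg 0

theorem iterate_succ_map_mul (hx : δ x = 1) (g : A) (m : ℕ) :
    δ^[m + 1] (x * g) = x * δ^[m + 1] g + (m + 1) * δ^[m] g := by
  induction m with
  | zero => simp [hx]
  | succ m ih =>
    have hm : δ ((m + 1) * δ^[m] g) = (m + 1) * δ^[m + 1] g := by
      simp [Function.iterate_succ_apply']
    rw [Function.iterate_succ_apply', ih, map_add, hm, Derivation.leibniz, hx,
      ← Function.iterate_succ_apply' δ, smul_eq_mul, smul_eq_mul]
    push_cast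
    ring

theorem eq_zero_of_map_mul_eq_zero [Algebra ℚ A] (hx : δ x = 1) {g : A} (hxg : δ (x * g) = 0)
    {m : ℕ} (hg : δ^[m] g = 0) : g = 0 := by
  induction m with
  | zero => exact hg
  | succ m ih =>
    have hm : ((m + 1 : ℚ)) • δ^[m] g = 0 := by
      have := iterate_succ_map_mul hx g m
      rw [Function.iterate_succ_apply, hxg, iterate_map_zero, hg, mul_zero, zero_add] at this
      simpa [Algebra.smul_def] using this.symm
    exact ih (((IsUnit.mk0 _ (by positivity)).smul_eq_zero).1 hm)

theorem bijective_mk_comp_val_derivationConstants [Algebra ℚ A] (hx : δ x = 1)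
    (hδ : ∀ g, ∃ m, δ^[m] g = 0) :
    Function.Bijective
      ((Ideal.Quotient.mkₐ R (Ideal.span {x})).comp (derivationConstants δ).val) := by
  constructor
  · refine (injective_iff_map_eq_zero _).2 fun ⟨a, ha⟩ h0 => ?_
    obtain ⟨g, rfl⟩ := Ideal.mem_span_singleton.1 (Ideal.Quotient.eq_zero_iff_mem.1 h0)
    obtain ⟨m, hm⟩ := hδ g
    exact Subtype.ext (by simp [eq_zero_of_map_mul_eq_zero hx ha hm])
  · intro q
    obtain ⟨g, rfl⟩ := Ideal.Quotient.mk_surjective q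
    obtain ⟨m, hm⟩ := hδ (δ g)
    obtain ⟨h, hh⟩ := exists_map_mul_eq hx hm
    exact ⟨⟨g - x * h, by simp [mem_derivationConstants, hh]⟩, by simp⟩

end Slice

/-- A ring `R` is étale simply connected if every finite étale `R`-algebra that is a domain is
trivial. For `R` a normal domain this says that `Spec R` has no nontrivial connected finite étale
cover. The algebras range over a fixed universe `v`. -/
def IsEtaleSimplyConnected (R : Type*) [CommRing R] : Prop :=
  ∀ (S : Type v) [CommRing S] [IsDomain S] [Algebra R S] [Module.Finite R S] [Algebra.Etale R S],
    Function.Bijective (algebraMap R S)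

section QuotientFiber

variable {R A : Type*} (D : Type*) [CommRing R] [CommRing A] [CommRing D] [Algebra R A]
  [Algebra R D] [Algebra A D] [IsScalarTower R A D] (I : Ideal A)

theorem isScalarTower_quotient_map : IsScalarTower R (A ⧸ I) (D ⧸ I.map (algebraMap A D)) :=
  .of_algebraMap_eq fun r => congrArg (Ideal.Quotient.mk _) (IsScalarTower.algebraMap_apply R A D r)

theorem etale_quotient_map_of_bijective [Algebra.Etale A D]
    (hI : Function.Bijective (algebraMap R (A ⧸ I))) :
    Algebra.Etale R (D ⧸ I.map (algebraMap A D)) := by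
  have := isScalarTower_quotient_map (R := R) D I
  have : Algebra.Etale (A ⧸ I) (D ⧸ I.map (algebraMap A D)) :=
    .of_equiv (A := (A ⧸ I) ⊗[A] D) (Algebra.TensorProduct.quotIdealMapEquivQuotTensor D I).symm
  have : Algebra.Etale R (A ⧸ I) := .of_equiv (.ofBijective (Algebra.ofId R _) hI)
  exact .comp R (A ⧸ I) _

theorem finite_quotient_map_of_surjective [Module.Finite A D]
    (hI : Function.Surjective (algebraMap R (A ⧸ I))) :
    Module.Finite R (D ⧸ I.map (algebraMap A D)) := by
  have := isScalarTower_quotient_map (R := R) D I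
  have : Module.Finite (A ⧸ I) (D ⧸ I.map (algebraMap A D)) :=
    .of_restrictScalars_finite A _ _
  have : Module.Finite R (A ⧸ I) := .of_surjective (Algebra.linearMap R _) hI
  exact .trans (A ⧸ I) _

end QuotientFiber

theorem bijective_algebraMap_quotient_span_X {R : Type*} [CommRing R] :
    Function.Bijective (algebraMap R (R[X] ⧸ Ideal.span {(X : R[X])})) := by
  let e : R ≃ₐ[R] R[X] ⧸ Ideal.span {(X : R[X])} :=
    (quotientSpanXSubCAlgEquiv 0).symm.trans (Ideal.quotientEquivAlgOfEq R (by simp))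
  exact (funext e.commutes : ⇑e = algebraMap R _) ▸ e.bijective

section Polynomial

variable {R D : Type*} [CommRing R] [CommRing D] [Algebra R D] [Algebra R[X] D]
  [IsScalarTower R R[X] D]

theorem exists_derivative_eq [Algebra ℚ R] (p : R[X]) : ∃ q : R[X], derivative q = p := by
  obtain ⟨q, hq⟩ := exists_map_mul_eq (δ := derivative' (R := R)) derivative_X
    (iterate_derivative_eq_zero (p := p) (Nat.lt_succ_self _))
  exact ⟨_, hq⟩

theorem mem_range_algebraMap_of_iterate_eq_zero [Algebra ℚ R] {d : Derivation R D D}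
    (hd : ∀ p, d (algebraMap R[X] D p) = algebraMap R[X] D (derivative p))
    (hconst : Function.Surjective (algebraMap R (derivationConstants d))) {m : ℕ} {g : D}
    (hg : d^[m] g = 0) : g ∈ (algebraMap R[X] D).range := by
  induction m generalizing g with
  | zero => exact (show g = 0 from hg) ▸ zero_mem _
  | succ m ih =>
    obtain ⟨p, hp⟩ := ih (g := d g) hg
    obtain ⟨q, rfl⟩ := exists_derivative_eq p
    obtain ⟨r, hr⟩ := hconst ⟨g - algebraMap R[X] D q, by simp [mem_derivationConstants, hd, hp]⟩
    refine ⟨C r + q, ?_⟩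
    have hCr : algebraMap R[X] D (C r) = g - algebraMap R[X] D q :=
      (IsScalarTower.algebraMap_apply R R[X] D r).symm.trans (congrArg Subtype.val hr)
    rw [map_add, hCr, sub_add_cancel]

end Polynomial

theorem IsEtaleSimplyConnected.polynomial {R : Type*} [CommRing R] [IsDomain R] [Algebra ℚ R]
    (hR : IsEtaleSimplyConnected.{v} R) : IsEtaleSimplyConnected.{v} R[X] := by
  intro D _ _ _ _ _
  let : Algebra R D := .compHom D (C : R →+* R[X])
  have : IsScalarTower R R[X] D := .of_algebraMap_eq' rfl
  let : Algebra ℚ D := .compHom D (algebraMap ℚ R)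
  have : CharZero R := algebraRat.charZero R
  have : FaithfulSMul R[X] D :=
    have : Module.IsTorsionFree R[X] D := Module.Flat.isTorsionFree
    Module.IsTorsionFree.to_faithfulSMul
  have : FaithfulSMul R D := .trans R R[X] D
  obtain ⟨d, hd⟩ := exists_derivation_algebraMap_eq (T := D) (derivative' (R := R))
  have hdX : d (algebraMap R[X] D X) = 1 := by rw [hd, derivative'_apply, derivative_X, map_one]
  have hnil := exists_iterate_eq_zero_of_map_algebraMap_X hdX
  let e := (AlgEquiv.ofBijective _ (bijective_mk_comp_val_derivationConstants hdX hnil)).trans <|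
    Ideal.quotientEquivAlgOfEq R
      (Set.image_singleton ▸ (Ideal.map_span (algebraMap R[X] D) {X}).symm)
  have hX := bijective_algebraMap_quotient_span_X (R := R)
  have := etale_quotient_map_of_bijective D _ hX
  have := finite_quotient_map_of_surjective D _ hX.2
  have : Algebra.Etale R (derivationConstants d) := .of_equiv e.symm
  have : Module.Finite R (derivationConstants d) := .equiv e.symm.toLinearEquiv
  refine ⟨FaithfulSMul.algebraMap_injective _ _, fun g => ?_⟩
  obtain ⟨m, hm⟩ := hnil g
  exact mem_range_algebraMap_of_iterate_eq_zero hd (hR (derivationConstants d)).2 hm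

theorem IsEtaleSimplyConnected.of_ringEquiv {R R' : Type*} [CommRing R] [CommRing R']
    (e : R ≃+* R') (hR : IsEtaleSimplyConnected.{v} R) : IsEtaleSimplyConnected.{v} R' := by
  intro S _ _ _ _ _
  let : Algebra R R' := e.toRingHom.toAlgebra
  let : Algebra R S := .compHom S e.toRingHom
  have : IsScalarTower R R' S := .of_algebraMap_eq' rfl
  let f : R ≃ₐ[R] R' := { e with commutes' := fun _ => rfl }
  have : Algebra.Etale R R' := .of_equiv f
  have : Module.Finite R R' := .equiv f.toLinearEquiv
  have : Algebra.Etale R S := .comp R R' S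
  have : Module.Finite R S := .trans R' S
  exact (Function.Bijective.of_comp_iff _ e.bijective).1 (hR S)

theorem IsEtaleSimplyConnected.of_isAlgClosed (k : Type*) [Field k] [IsAlgClosed k] :
    IsEtaleSimplyConnected.{v} k :=
  fun _ => IsAlgClosed.algebraMap_bijective_of_isIntegral

theorem polynomial_ring_simply_connected_general {R : Type*} [CommRing R] [IsDomain R] [Algebra ℚ R]
    (hR : IsEtaleSimplyConnected.{v} R) (σ : Type*) [Finite σ] :
    IsEtaleSimplyConnected.{v} (MvPolynomial σ R) := by
  induction σ using Finite.induction_empty_option with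
  | of_equiv e h => exact h.of_ringEquiv (MvPolynomial.renameEquiv R e).toRingEquiv
  | h_empty => exact hR.of_ringEquiv (MvPolynomial.isEmptyAlgEquiv R PEmpty).symm.toRingEquiv
  | h_option h =>
    exact h.polynomial.of_ringEquiv (MvPolynomial.optionEquivLeft R _).symm.toRingEquiv

/-- Simple connectivity of affine space: let `k` be an algebraically closed field of
characteristic zero, `B = k[Y_1, ..., Y_n]` a polynomial ring and `D` a `k`-affine domain.
If `D` is finite etale over `B`, then `D = B`. -/
theorem polynomial_ring_simply_connected
    (n : ℕ) (k D : Type*) [Field k] [IsAlgClosed k] [CharZero k]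
    [CommRing D] [IsDomain D] [Algebra k D] [Algebra.FiniteType k D]
    [Algebra (MvPolynomial (Fin n) k) D] [IsScalarTower k (MvPolynomial (Fin n) k) D]
    (hinj : Function.Injective (algebraMap (MvPolynomial (Fin n) k) D))
    -- `D` is module-finite over `B`
    [Module.Finite (MvPolynomial (Fin n) k) D]
    -- `D` is unramified and flat (etale) over `B`
    (hunr : Algebra.FormallyUnramified (MvPolynomial (Fin n) k) D)
    (hflat : Module.Flat (MvPolynomial (Fin n) k) D) :
    Function.Bijective (algebraMap (MvPolynomial (Fin n) k) D) := by
  have : Algebra.FinitePresentation (MvPolynomial (Fin n) k) D :=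
    Algebra.FinitePresentation.of_finiteType.1 inferInstance
  have : Algebra.Etale (MvPolynomial (Fin n) k) D := .of_formallyUnramified_of_flat
  exact polynomial_ring_simply_connected_general (.of_isAlgClosed k) (Fin n) D
end

section
/- (Zariski's Main Theorem) Let A be an integral domain and let B be an A-algebra of finite type that is quasi-finite over A. Let Ā be the integral closure of A in B. Then the canonical morphism Spec(B) → Spec(Ā) is an open immersion. -/
/-!
Localizing at a single well-chosen element is enough. The algebraic form of Zariski's Main Theorem
gives, at every prime `Q` where `B` is quasi-finite over `A`, an element `r` of the integral
closure `Ā` outside `Q` with `Ā[1/r] = B[1/r]`. The basic opens `D(r)` of `Spec Ā` thus cover the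
image of `Spec B`, and over each of them `Spec B → Spec Ā` is an isomorphism.
-/

universe u

open AlgebraicGeometry CategoryTheory

theorem isIso_SpecMap_morphismRestrict_basicOpen_iff {R S : CommRingCat.{u}} (f : R ⟶ S) (r : R) :
    IsIso (Spec.map f ∣_ PrimeSpectrum.basicOpen r) ↔
      Function.Bijective (Localization.awayMap f.hom r) :=
  (MorphismProperty.arrow_mk_iso_iff (.isomorphisms Scheme)
    (SpecMapRestrictBasicOpenIso f r)).trans isIso_SpecMap_iff

theorem isOpenImmersion_SpecMap_of_forall_exists_awayMap_bijective {R S : CommRingCat.{u}}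
    (f : R ⟶ S)
    (h : ∀ Q : PrimeSpectrum S, ∃ r : R, f.hom r ∉ Q.asIdeal ∧
      Function.Bijective (Localization.awayMap f.hom r)) :
    IsOpenImmersion (Spec.map f) := by
  choose r hrQ hr using h
  have range_subset : Set.range (Spec.map f) ⊆
      ((⨆ Q, PrimeSpectrum.basicOpen (r Q) : (Spec R).Opens) : Set (Spec R)) := by
    rintro _ ⟨Q, rfl⟩
    exact TopologicalSpace.Opens.mem_iSup.mpr ⟨Q, hrQ Q⟩
  refine IsZariskiLocalAtTarget.of_range_subset_iSup (P := @IsOpenImmersion) _ range_subset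
    fun Q ↦ ?_
  have := (isIso_SpecMap_morphismRestrict_basicOpen_iff f (r Q)).mpr (hr Q)
  infer_instance

theorem isOpenImmersion_SpecMap_integralClosure_of_zariskisMainProperty
    {A : Type*} {B : Type u} [CommRing A] [CommRing B] [Algebra A B]
    (h : ∀ Q : PrimeSpectrum B, Algebra.ZariskisMainProperty A Q.asIdeal) :
    IsOpenImmersion (Spec.map (CommRingCat.ofHom (algebraMap (integralClosure A B) B))) :=
  isOpenImmersion_SpecMap_of_forall_exists_awayMap_bijective _ h

theorem zariski_main_theorem_general
    (A : Type*) (B : Type u) [CommRing A] [CommRing B] [Algebra A B]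
    [Algebra.FiniteType A B] [Algebra.QuasiFinite A B] :
    IsOpenImmersion (Spec.map (CommRingCat.ofHom (algebraMap (integralClosure A B) B))) :=
  isOpenImmersion_SpecMap_integralClosure_of_zariskisMainProperty
    fun Q ↦ .of_finiteType Q.asIdeal

/-- **Zariski's Main Theorem.**  Let `A` be an integral domain and `B` an `A`-algebra of
finite type which is quasi-finite over `A` (every fiber of `Spec B → Spec A` is finite and
discrete).  Let `Ā` be the integral closure of `A` in `B`.  Then the canonical morphism
`Spec B → Spec Ā` is an open immersion. -/
theorem zariski_main_theorem
    (A B : Type u) [CommRing A] [IsDomain A] [CommRing B]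
    [Algebra A B] [Algebra.FiniteType A B]
    -- `B` is quasi-finite over `A`: the fibers of `Spec B → Spec A` are finite and discrete
    (hqf : ∀ p : PrimeSpectrum A,
      {Q : PrimeSpectrum B | PrimeSpectrum.comap (algebraMap A B) Q = p}.Finite ∧
      DiscreteTopology {Q : PrimeSpectrum B | PrimeSpectrum.comap (algebraMap A B) Q = p}) :
    AlgebraicGeometry.IsOpenImmersion
      (AlgebraicGeometry.Spec.map
        (CommRingCat.ofHom (algebraMap (integralClosure A B) B))) := by
  have : Algebra.QuasiFinite A B :=
    Algebra.QuasiFinite.iff_finite_comap_preimage_singleton.mpr fun p ↦ (hqf p).1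
  exact zariski_main_theorem_general A B
end
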